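/- Let α ∈ (1,2) and β > 0. There exists a constant C = C(α,β) > 0 such that |E_{α,β}(−μ)| ≤ C/(1+μ) for every μ ≥ 0. -/

import Mathlib

/-- The Mittag-Leffler function of real parameters `α, β > 0` at a real argument:
`E_{α,β}(x) = Σ_{k=0}^∞ x^k / Γ(αk + β)`. -/
noncomputable def mittagLeffler (α β x : ℝ) : ℝ :=
  ∑' k : ℕ, x ^ k / Real.Gamma (α * k + β)

/-!
Put `z = exp ζ`, which turns the sector `|arg z| < δ` into the strip `|Im ζ| < δ`. For `β > 1` and
`|z| < 1`, inserting `1 / Γ(αk + β) = (2πi)⁻¹ ∫_{Re s = 1} e^s s^{-(αk + β)} ds` into the power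
series gives `E_{α,β}(-z) = (2πi)⁻¹ ∫_{Re s = 1} e^s s^{-β} / (1 + z s^{-α}) ds`. Since `α < 2`, the
argument of `z s^{-α}` stays away from `±π` when `z` lies in a thin sector, so that
`|1 + z s^{-α}| ≥ c (1 + |z| |s|^{-α})`. Hence the formula persists on the whole sector by analytic
continuation, and for `β > α + 1` it shows that `E_{α,β}(-z) = O(1 / |z|)` there.

Smaller `β` are reached by descent: `1 / Γ(s) = s / Γ(s + 1)` yields
`E_{α,β}(z) = β E_{α,β+1}(z) + α z (d/dz) E_{α,β+1}(z)`, and `z d/dz = d/dζ` preserves the bound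
`O(exp (-Re ζ))` on strips by Cauchy's estimate.
-/

open MeasureTheory Filter Topology Set FourierTransform
open scoped Real

section ParametricIntegral

variable {X E : Type*} [MeasurableSpace X] {ν : Measure X} [NormedAddCommGroup E]

lemma aestronglyMeasurable_of_hasDerivAt {𝕜 : Type*} [NontriviallyNormedField 𝕜] [NormedSpace 𝕜 E]
    {F : 𝕜 → X → E} {F' : X → E} {z : 𝕜} (hF : ∀ᶠ w in 𝓝 z, AEStronglyMeasurable (F w) ν)
    (hF' : ∀ᵐ a ∂ν, HasDerivAt (F · a) (F' a) z) : AEStronglyMeasurable F' ν := by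
  classical
  let q (w : 𝕜) (a : X) : E := slope (F · a) z w
  have hq : ∀ᶠ w in 𝓝[≠] z, AEStronglyMeasurable (q w) ν := by
    filter_upwards [hF.filter_mono nhdsWithin_le_nhds] with w hw
    exact (hw.sub hF.self_of_nhds).const_smul (w - z)⁻¹
  refine aestronglyMeasurable_of_tendsto_ae (𝓝[≠] z)
    (f := fun w => if AEStronglyMeasurable (q w) ν then q w else 0) (fun w => ?_) ?_
  · split_ifs with hw
    exacts [hw, aestronglyMeasurable_zero]
  · filter_upwards [hF'] with a ha
    refine (hasDerivAt_iff_tendsto_slope.1 ha).congr' ?_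
    filter_upwards [hq] with w hw
    rw [if_pos hw]

lemma differentiableOn_integral_of_norm_le [NormedSpace ℂ E] {U : Set ℂ} (hU : IsOpen U)
    {F : ℂ → X → E} {bound : X → ℝ} (hF : ∀ z ∈ U, AEStronglyMeasurable (F z) ν)
    (hd : ∀ᵐ a ∂ν, DifferentiableOn ℂ (F · a) U) (hb : ∀ᵐ a ∂ν, ∀ z ∈ U, ‖F z a‖ ≤ bound a)
    (hbound : Integrable bound ν) : DifferentiableOn ℂ (fun z => ∫ a, F z a ∂ν) U := by
  intro z hz
  obtain ⟨r, hr, hball⟩ : ∃ r > 0, Metric.ball z (r + r) ⊆ U := by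
    obtain ⟨ε, hε, h⟩ := Metric.isOpen_iff.1 hU z hz
    exact ⟨ε / 2, half_pos hε, by rwa [add_halves]⟩
  have hsub : ∀ w ∈ Metric.ball z r, Metric.closedBall w r ⊆ U := fun w hw =>
    (Metric.closedBall_subset_ball' (by linarith [Metric.mem_ball.1 hw])).trans hball
  have hderiv : ∀ᵐ a ∂ν, ∀ w ∈ Metric.ball z r, HasDerivAt (F · a) (deriv (F · a) w) w := by
    filter_upwards [hd] with a ha w hw
    exact (ha.differentiableAt
      (hU.mem_nhds (hsub w hw (Metric.mem_closedBall_self hr.le)))).hasDerivAt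
  have cauchy : ∀ᵐ a ∂ν, ∀ w ∈ Metric.ball z r, ‖deriv (F · a) w‖ ≤ bound a / r := by
    filter_upwards [hd, hb] with a hda hba w hw
    exact Complex.norm_deriv_le_of_forall_mem_sphere_norm_le hr
      ((hda.mono (hsub w hw)).diffContOnCl_ball subset_rfl)
      fun y hy => hba y (hsub w hw (Metric.sphere_subset_closedBall hy))
  have hF_near : ∀ᶠ w in 𝓝 z, AEStronglyMeasurable (F w) ν := by
    filter_upwards [hU.mem_nhds hz] using hF
  have hz_mem : z ∈ Metric.ball z r := Metric.mem_ball_self hr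
  exact (hasDerivAt_integral_of_dominated_loc_of_deriv_le (Metric.ball_mem_nhds z hr) hF_near
    (hbound.mono' (hF z hz) (hb.mono fun a ha => ha z hz))
    (aestronglyMeasurable_of_hasDerivAt hF_near (hderiv.mono fun a ha => ha z hz_mem))
    cauchy (hbound.div_const r) hderiv).2.differentiableAt.differentiableWithinAt

end ParametricIntegral

lemma eqOn_of_eq_ofReal {E : Type*} [NormedAddCommGroup E] [NormedSpace ℂ E] [CompleteSpace E]
    {U : Set ℂ} {f g : ℂ → E} (hU : IsOpen U) (hUc : IsPreconnected U)
    (hf : DifferentiableOn ℂ f U) (hg : DifferentiableOn ℂ g U) {x₀ : ℝ} (hx₀ : (x₀ : ℂ) ∈ U)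
    (hfg : ∀ᶠ x : ℝ in 𝓝 x₀, f x = g x) : EqOn f g U := by
  have ofReal_tendsto : Tendsto ((↑) : ℝ → ℂ) (𝓝[≠] x₀) (𝓝[≠] (x₀ : ℂ)) :=
    Complex.continuous_ofReal.continuousWithinAt.tendsto_nhdsWithin
      fun x hx => Complex.ofReal_injective.ne hx
  exact (hf.analyticOnNhd hU).eqOn_of_preconnected_of_frequently_eq (hg.analyticOnNhd hU) hUc hx₀
    (ofReal_tendsto.frequently (hfg.filter_mono nhdsWithin_le_nhds).frequently)

section EntirePowerSeries

variable {a : ℕ → ℂ} (ha : ∀ r : ℝ, Summable fun k => ‖a k‖ * r ^ k)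

include ha

lemma hasSum_mul_pow_of_entire (z : ℂ) : HasSum (fun k => a k * z ^ k) (∑' k, a k * z ^ k) :=
  (Summable.of_norm (by simpa only [norm_mul, norm_pow] using ha ‖z‖)).hasSum

lemma differentiable_tsum_mul_pow : Differentiable ℂ fun z => ∑' k, a k * z ^ k := by
  intro z
  refine (Complex.differentiableOn_tsum_of_summable_norm (U := Metric.ball 0 (‖z‖ + 1))
    (ha (‖z‖ + 1)) (fun k => by fun_prop) Metric.isOpen_ball fun k w hw => ?_).differentiableAt
    (Metric.isOpen_ball.mem_nhds (by simp))
  rw [norm_mul, norm_pow]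
  gcongr
  exact (mem_ball_zero_iff.1 hw).le

lemma hasSum_natCast_mul_mul_pow (z : ℂ) :
    HasSum (fun k : ℕ => k * (a k * z ^ k)) (z * deriv (fun w => ∑' k, a k * w ^ k) z) := by
  have termwise : HasSum (fun k => deriv (fun w => a k * w ^ k) z)
      (deriv (fun w => ∑' k, a k * w ^ k) z) := by
    refine Complex.hasSum_deriv_of_summable_norm (U := Metric.ball 0 (‖z‖ + 1))
      (ha (‖z‖ + 1)) (fun k => by fun_prop) Metric.isOpen_ball (fun k w hw => ?_) (by simp)
    rw [norm_mul, norm_pow]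
    gcongr
    exact (mem_ball_zero_iff.1 hw).le
  refine (termwise.mul_left z).congr_fun fun k => ?_
  rcases k with _ | k
  · simp
  · simp; ring

end EntirePowerSeries

section GammaIntegrals

lemma rpow_mul_exp_neg_le_Gamma {R b : ℝ} (hR : 0 ≤ R) (hb : 1 ≤ b) :
    R ^ (b - 1) * Real.exp (-R) ≤ Real.Gamma b := by
  have hconv := Real.GammaIntegral_convergent (zero_lt_one.trans_le hb)
  calc R ^ (b - 1) * Real.exp (-R) = ∫ x in Ioi R, Real.exp (-x) * R ^ (b - 1) := by
        rw [integral_mul_const, integral_exp_neg_Ioi, mul_comm]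
    _ ≤ ∫ x in Ioi R, Real.exp (-x) * x ^ (b - 1) := by
        refine setIntegral_mono_on ((integrableOn_exp_neg_Ioi R).mul_const _)
          (hconv.mono_set (Ioi_subset_Ioi hR)) measurableSet_Ioi fun x hx => ?_
        gcongr
        exact (mem_Ioi.1 hx).le
    _ ≤ ∫ x in Ioi 0, Real.exp (-x) * x ^ (b - 1) := by
        refine setIntegral_mono_set hconv ?_ (Ioi_subset_Ioi hR).eventuallyLE
        filter_upwards [ae_restrict_mem measurableSet_Ioi] with x hx
        have : 0 < x := hx
        positivity
    _ = Real.Gamma b := (Real.Gamma_eq_integral (zero_lt_one.trans_le hb)).symm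

lemma summable_abs_inv_Gamma_mul_pow {α : ℝ} (hα : 0 < α) (β r : ℝ) :
    Summable fun k : ℕ => |(Real.Gamma (α * k + β))⁻¹| * r ^ k := by
  obtain ⟨R, hR, hrR⟩ : ∃ R > 0, |r| < R ^ α :=
    ⟨(|r| + 1) ^ α⁻¹, by positivity, by rw [Real.rpow_inv_rpow (by positivity) hα.ne']; linarith⟩
  have hratio : |r| / R ^ α < 1 := (div_lt_one (by positivity)).2 hrR
  refine .of_norm_bounded_eventually_nat ((summable_geometric_of_lt_one (by positivity)
    hratio).mul_left (Real.exp R * R ^ (1 - β))) ?_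
  have one_le : ∀ᶠ k : ℕ in atTop, 1 ≤ α * k + β :=
    (tendsto_atTop_add_const_right _ _
      (tendsto_natCast_atTop_atTop.const_mul_atTop hα)).eventually_ge_atTop 1
  filter_upwards [one_le] with k hk
  have hpos : 0 < Real.Gamma (α * k + β) := Real.Gamma_pos_of_pos (by linarith)
  rw [norm_mul, norm_pow, Real.norm_eq_abs, Real.norm_eq_abs, abs_abs, abs_of_pos (inv_pos.2 hpos)]
  calc (Real.Gamma (α * k + β))⁻¹ * |r| ^ k
      ≤ (R ^ (α * k + β - 1) * Real.exp (-R))⁻¹ * |r| ^ k := by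
        gcongr
        exact rpow_mul_exp_neg_le_Gamma hR.le hk
    _ = Real.exp R * R ^ (1 - β) * (|r| / R ^ α) ^ k := by
        rw [show α * k + β - 1 = α * k - (1 - β) by ring, Real.rpow_sub hR, Real.rpow_mul hR.le,
          Real.rpow_natCast, Real.exp_neg, div_pow]
        field_simp

lemma norm_cpow_mul_exp_neg_mul {t : ℝ} (ht : 0 < t) (a s : ℂ) :
    ‖(t : ℂ) ^ (a - 1) * Complex.exp (-(s * t))‖ = t ^ (a.re - 1) * Real.exp (-(s.re * t)) := by
  rw [norm_mul, Complex.norm_cpow_eq_rpow_re_of_pos ht, Complex.norm_exp]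
  simp

lemma aestronglyMeasurable_cpow_mul_exp_neg_mul (a s : ℂ) :
    AEStronglyMeasurable (fun t : ℝ => (t : ℂ) ^ (a - 1) * Complex.exp (-(s * t)))
      (volume.restrict (Ioi 0)) := by
  refine ContinuousOn.aestronglyMeasurable (.mul (fun t ht => ?_) (by fun_prop)) measurableSet_Ioi
  exact (Complex.continuousAt_ofReal_cpow_const _ _ (.inr (ne_of_gt ht))).continuousWithinAt

lemma integrableOn_rpow_mul_exp_neg_mul {a r : ℝ} (ha : 0 < a) (hr : 0 < r) :
    IntegrableOn (fun t : ℝ => t ^ (a - 1) * Real.exp (-(r * t))) (Ioi 0) := by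
  simpa using integrableOn_rpow_mul_exp_neg_mul_rpow (by linarith : -1 < a - 1) one_pos hr

lemma integrableOn_cpow_mul_exp_neg_mul {a s : ℂ} (ha : 0 < a.re) (hs : 0 < s.re) :
    IntegrableOn (fun t : ℝ => (t : ℂ) ^ (a - 1) * Complex.exp (-(s * t))) (Ioi 0) := by
  refine (integrableOn_rpow_mul_exp_neg_mul ha hs).mono'
    (aestronglyMeasurable_cpow_mul_exp_neg_mul a s) ?_
  filter_upwards [ae_restrict_mem measurableSet_Ioi] with t ht
  exact (norm_cpow_mul_exp_neg_mul ht a s).le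

lemma integral_cpow_mul_exp_neg_mul_of_re_pos {a s : ℂ} (ha : 0 < a.re) (hs : 0 < s.re) :
    ∫ t in Ioi (0 : ℝ), (t : ℂ) ^ (a - 1) * Complex.exp (-(s * t)) =
      s ^ (-a) * Complex.Gamma a := by
  let U : Set ℂ := {w | s.re / 2 < w.re}
  have hU : IsOpen U := isOpen_lt continuous_const Complex.continuous_re
  have re_pos {w : ℂ} (hw : w ∈ U) : 0 < w.re := (half_pos hs).trans hw
  have laplace_holo : DifferentiableOn ℂ
      (fun w : ℂ => ∫ t in Ioi (0 : ℝ), (t : ℂ) ^ (a - 1) * Complex.exp (-(w * t))) U := by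
    refine differentiableOn_integral_of_norm_le hU
      (fun w _ => aestronglyMeasurable_cpow_mul_exp_neg_mul a w) (.of_forall fun t => by fun_prop)
      ?_ (integrableOn_rpow_mul_exp_neg_mul ha (half_pos hs))
    filter_upwards [ae_restrict_mem measurableSet_Ioi] with t ht w hw
    have ht : 0 < t := ht
    have hw : s.re / 2 < w.re := hw
    rw [norm_cpow_mul_exp_neg_mul ht]
    gcongr
  have cpow_holo : DifferentiableOn ℂ (fun w : ℂ => w ^ (-a) * Complex.Gamma a) U := fun w hw =>
    ((differentiableAt_id.cpow_const (.inl (re_pos hw))).mul_const _).differentiableWithinAt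
  refine eqOn_of_eq_ofReal hU (convex_halfSpace_re_gt _).isPreconnected laplace_holo cpow_holo
    (x₀ := s.re) (by simpa [U] using hs) ?_ (by simpa [U] using hs)
  filter_upwards [lt_mem_nhds hs] with r hr
  rw [Complex.integral_cpow_mul_exp_neg_mul_Ioi ha hr, one_div, Complex.inv_cpow, Complex.cpow_neg]
  rw [Complex.arg_ofReal_of_nonneg hr.le]
  exact Real.pi_pos.ne

end GammaIntegrals

section ReciprocalGamma

/-- The vertical line `Re s = 1` along which the inverse Laplace transform is taken. The factor
`2π` matches Mathlib's normalization of the Fourier transform, so that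
`(2πi)⁻¹ ∫_{Re s = 1} f(s) ds = ∫ f (bromwichLine x) dx`. -/
noncomputable def bromwichLine (x : ℝ) : ℂ := 1 + (2 * π * x : ℝ) * Complex.I

lemma bromwichLine_re (x : ℝ) : (bromwichLine x).re = 1 := by simp [bromwichLine]

lemma bromwichLine_re_pos (x : ℝ) : 0 < (bromwichLine x).re := bromwichLine_re x ▸ one_pos

lemma bromwichLine_ne_zero (x : ℝ) : bromwichLine x ≠ 0 := fun h => by
  simpa [h] using bromwichLine_re x

lemma continuous_bromwichLine : Continuous bromwichLine := by unfold bromwichLine; fun_prop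

lemma continuous_bromwichLine_cpow (c : ℂ) : Continuous fun x => bromwichLine x ^ c :=
  continuous_bromwichLine.cpow continuous_const fun x => .inl (bromwichLine_re_pos x)

lemma norm_exp_bromwichLine (x : ℝ) : ‖Complex.exp (bromwichLine x)‖ = Real.exp 1 := by
  rw [Complex.norm_exp, bromwichLine_re]

lemma norm_bromwichLine_cpow_neg (c x : ℝ) :
    ‖bromwichLine x ^ (-c : ℂ)‖ = ‖bromwichLine x‖ ^ (-c) := by
  rw [← Complex.ofReal_neg, Complex.norm_cpow_real]

lemma one_le_norm_bromwichLine (x : ℝ) : 1 ≤ ‖bromwichLine x‖ := by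
  simpa [bromwichLine_re] using Complex.abs_re_le_norm (bromwichLine x)

lemma abs_le_norm_bromwichLine (x : ℝ) : |x| ≤ ‖bromwichLine x‖ :=
  calc |x| ≤ 2 * π * |x| := le_mul_of_one_le_left (abs_nonneg x) (by linarith [Real.pi_gt_three])
    _ = |(bromwichLine x).im| := by simp [bromwichLine, abs_mul, abs_of_pos Real.pi_pos]
    _ ≤ ‖bromwichLine x‖ := Complex.abs_im_le_norm _

lemma integrable_norm_bromwichLine_rpow_neg {b : ℝ} (hb : 1 < b) :
    Integrable fun x => ‖bromwichLine x‖ ^ (-b) := by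
  have japanese : Integrable fun x : ℝ => (1 + ‖x‖) ^ (-b) :=
    integrable_one_add_norm (by simpa using hb)
  refine (japanese.const_mul ((1 / 2 : ℝ) ^ (-b))).mono'
    (continuous_bromwichLine.norm.rpow_const
      fun x => .inl (norm_ne_zero_iff.2 (bromwichLine_ne_zero x))).aestronglyMeasurable
    (.of_forall fun x => ?_)
  rw [Real.norm_of_nonneg (by positivity), ← Real.mul_rpow (by positivity) (by positivity)]
  refine Real.rpow_le_rpow_of_nonpos (by positivity) ?_ (by linarith)
  rw [Real.norm_eq_abs]
  linarith [one_le_norm_bromwichLine x, abs_le_norm_bromwichLine x]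

/-- The function `t ↦ t ^ (b - 1) * exp (-t)` on `t > 0`, extended by zero: the density of the Gamma
distribution without its normalizing factor `1 / Γ(b)`. -/
noncomputable def gammaDensity (b : ℝ) : ℝ → ℂ :=
  (Ioi 0).indicator fun t => (t : ℂ) ^ (b - 1 : ℂ) * Complex.exp (-t)

lemma integrable_gammaDensity {b : ℝ} (hb : 0 < b) : Integrable (gammaDensity b) := by
  have := integrableOn_cpow_mul_exp_neg_mul (a := b) (s := 1) (by simpa using hb) (by simp)
  simp only [one_mul] at this
  exact (integrable_indicator_iff measurableSet_Ioi).2 this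

lemma continuousAt_gammaDensity (b : ℝ) {t : ℝ} (ht : 0 < t) : ContinuousAt (gammaDensity b) t := by
  refine ContinuousAt.congr
    (.mul (Complex.continuousAt_ofReal_cpow_const _ (b - 1 : ℂ) (.inr ht.ne')) (by fun_prop))
    (f := fun t : ℝ => (t : ℂ) ^ (b - 1 : ℂ) * Complex.exp (-t)) ?_
  filter_upwards [Ioi_mem_nhds ht] with u hu
  simp only [gammaDensity, indicator_of_mem hu]

lemma fourier_gammaDensity {b : ℝ} (hb : 0 < b) (x : ℝ) :
    𝓕 (gammaDensity b) x = bromwichLine x ^ (-b : ℂ) * Real.Gamma b := by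
  rw [← Complex.Gamma_ofReal, ← integral_cpow_mul_exp_neg_mul_of_re_pos (by simpa using hb)
    (bromwichLine_re_pos x), Real.fourier_real_eq_integral_exp_smul,
    ← integral_indicator measurableSet_Ioi]
  refine integral_congr_ae (.of_forall fun t => ?_)
  by_cases ht : t ∈ Ioi (0 : ℝ)
  · simp only [gammaDensity, indicator_of_mem ht, smul_eq_mul]
    rw [mul_left_comm, ← Complex.exp_add]
    congr 2
    simp only [bromwichLine]
    push_cast
    ring
  · simp [gammaDensity, indicator_of_notMem ht]

lemma integrable_fourier_gammaDensity {b : ℝ} (hb : 1 < b) : Integrable (𝓕 (gammaDensity b)) := by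
  simp only [funext (fourier_gammaDensity (zero_lt_one.trans hb))]
  refine .mul_const ((integrable_norm_bromwichLine_rpow_neg hb).mono'
    (continuous_bromwichLine_cpow _).aestronglyMeasurable (.of_forall fun x => ?_)) _
  exact (norm_bromwichLine_cpow_neg b x).le

lemma integral_exp_bromwichLine_mul_cpow_neg {b : ℝ} (hb : 1 < b) :
    ∫ x, Complex.exp (bromwichLine x) * bromwichLine x ^ (-b : ℂ) = (Real.Gamma b : ℂ)⁻¹ := by
  have hb₀ : 0 < b := zero_lt_one.trans hb
  have hΓ : (Real.Gamma b : ℂ) ≠ 0 := Complex.ofReal_ne_zero.2 (Real.Gamma_pos_of_pos hb₀).ne'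
  have inversion : 𝓕⁻ (𝓕 (gammaDensity b)) 1 = Complex.exp (-1) := by
    rw [(integrable_gammaDensity hb₀).fourierInv_fourier_eq (integrable_fourier_gammaDensity hb)
      (continuousAt_gammaDensity b one_pos)]
    simp [gammaDensity]
  have integrand (x : ℝ) : Complex.exp (bromwichLine x) * bromwichLine x ^ (-b : ℂ) =
      Complex.exp 1 / Real.Gamma b *
        (Complex.exp ((2 * π * inner ℝ x 1 : ℝ) * Complex.I) • 𝓕 (gammaDensity b) x) := by
    rw [fourier_gammaDensity hb₀, show Complex.exp (bromwichLine x) = Complex.exp 1 *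
      Complex.exp ((2 * π * inner ℝ x 1 : ℝ) * Complex.I) by simp [← Complex.exp_add, bromwichLine],
      smul_eq_mul]
    field_simp
  simp_rw [integrand]
  rw [integral_const_mul, ← Real.fourierInv_eq', inversion, div_mul_eq_mul_div, ← Complex.exp_add]
  simp

end ReciprocalGamma

section MittagLeffler

/-- The Mittag-Leffler function `E_{α,β}` of real parameters at a complex argument. At the poles of
`Γ` the convention `(Real.Gamma s)⁻¹ = 0` gives the value of the entire function `1 / Γ`, so this is
the usual entire function also when `β ≤ 0`. -/
noncomputable def complexMittagLeffler (α β : ℝ) (z : ℂ) : ℂ :=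
  ∑' k : ℕ, (Real.Gamma (α * k + β) : ℂ)⁻¹ * z ^ k

lemma complexMittagLeffler_ofReal (α β x : ℝ) :
    complexMittagLeffler α β x = mittagLeffler α β x := by
  simp only [complexMittagLeffler, mittagLeffler, Complex.ofReal_tsum]
  push_cast
  simp only [div_eq_inv_mul]

variable {α : ℝ} (hα : 0 < α)

include hα

lemma summable_norm_inv_Gamma_mul_pow (β r : ℝ) :
    Summable fun k : ℕ => ‖(Real.Gamma (α * k + β) : ℂ)⁻¹‖ * r ^ k := by
  simpa only [norm_inv, Complex.norm_real, Real.norm_eq_abs, abs_inv] using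
    summable_abs_inv_Gamma_mul_pow hα β r

lemma hasSum_complexMittagLeffler (β : ℝ) (z : ℂ) :
    HasSum (fun k : ℕ => (Real.Gamma (α * k + β) : ℂ)⁻¹ * z ^ k) (complexMittagLeffler α β z) :=
  hasSum_mul_pow_of_entire (summable_norm_inv_Gamma_mul_pow hα β) z

lemma differentiable_complexMittagLeffler (β : ℝ) :
    Differentiable ℂ (complexMittagLeffler α β) :=
  differentiable_tsum_mul_pow (summable_norm_inv_Gamma_mul_pow hα β)

lemma complexMittagLeffler_eq_add_deriv (β : ℝ) (z : ℂ) :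
    complexMittagLeffler α β z = β * complexMittagLeffler α (β + 1) z +
      α * (z * deriv (complexMittagLeffler α (β + 1)) z) := by
  refine (hasSum_complexMittagLeffler hα β z).unique ?_
  refine (((hasSum_complexMittagLeffler hα (β + 1) z).mul_left (β : ℂ)).add
    ((hasSum_natCast_mul_mul_pow (summable_norm_inv_Gamma_mul_pow hα (β + 1)) z).mul_left
      (α : ℂ))).congr_fun fun k => ?_
  have recurrence := Complex.one_div_Gamma_eq_self_mul_one_div_Gamma_add_one (α * k + β : ℂ)
  simp only [← Complex.Gamma_ofReal]
  push_cast
  rw [recurrence]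
  ring_nf

lemma differentiable_complexMittagLeffler_neg_exp (β : ℝ) :
    Differentiable ℂ fun ζ => complexMittagLeffler α β (-Complex.exp ζ) :=
  (differentiable_complexMittagLeffler hα β).comp Complex.differentiable_exp.neg

lemma complexMittagLeffler_neg_exp_eq_add_deriv (β : ℝ) (ζ : ℂ) :
    complexMittagLeffler α β (-Complex.exp ζ) =
      β * complexMittagLeffler α (β + 1) (-Complex.exp ζ) +
        α * deriv (fun ζ => complexMittagLeffler α (β + 1) (-Complex.exp ζ)) ζ := by
  have chain : deriv (fun ζ => complexMittagLeffler α (β + 1) (-Complex.exp ζ)) ζ =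
      deriv (complexMittagLeffler α (β + 1)) (-Complex.exp ζ) * -Complex.exp ζ :=
    ((differentiable_complexMittagLeffler hα (β + 1)).differentiableAt.hasDerivAt.comp ζ
      (Complex.hasDerivAt_exp ζ).neg).deriv
  rw [complexMittagLeffler_eq_add_deriv hα, chain, mul_comm (-Complex.exp ζ)]

end MittagLeffler

section DecayOnStrip

variable {E : Type*} [NormedAddCommGroup E]

/-- `F` is `O(exp (-Re ζ))` on some strip `|Im ζ| < δ`. For `F ζ = f (exp ζ)` this says that
`f z = O(1 / |z|)` on the sector `|arg z| < δ`. -/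
def DecaysOnStrip (F : ℂ → E) : Prop :=
  ∃ δ > 0, ∃ C : ℝ, ∀ ζ : ℂ, |ζ.im| < δ → ‖F ζ‖ ≤ C * Real.exp (-ζ.re)

variable {F G : ℂ → E}

lemma DecaysOnStrip.add (hF : DecaysOnStrip F) (hG : DecaysOnStrip G) :
    DecaysOnStrip fun ζ => F ζ + G ζ := by
  obtain ⟨δ, hδ, C, hC⟩ := hF
  obtain ⟨δ', hδ', C', hC'⟩ := hG
  refine ⟨min δ δ', lt_min hδ hδ', C + C', fun ζ hζ => (norm_add_le _ _).trans ?_⟩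
  rw [lt_min_iff] at hζ
  linarith [hC ζ hζ.1, hC' ζ hζ.2]

lemma DecaysOnStrip.const_smul [NormedSpace ℂ E] (hF : DecaysOnStrip F) (c : ℂ) :
    DecaysOnStrip fun ζ => c • F ζ := by
  obtain ⟨δ, hδ, C, hC⟩ := hF
  refine ⟨δ, hδ, ‖c‖ * C, fun ζ hζ => ?_⟩
  rw [norm_smul, mul_assoc]
  gcongr
  exact hC ζ hζ

lemma DecaysOnStrip.deriv [NormedSpace ℂ E] (hF : DecaysOnStrip F) (hd : Differentiable ℂ F) :
    DecaysOnStrip (deriv F) := by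
  obtain ⟨δ, hδ, C, hC⟩ := hF
  have hC₀ : 0 ≤ C := by simpa using (norm_nonneg _).trans (hC 0 (by simpa using hδ))
  refine ⟨δ / 2, half_pos hδ, C * Real.exp (δ / 2) / (δ / 2), fun ζ hζ => ?_⟩
  have on_circle : ∀ w ∈ Metric.sphere ζ (δ / 2), ‖F w‖ ≤ C * Real.exp (δ / 2 - ζ.re) := by
    intro w hw
    have hdist : ‖w - ζ‖ = δ / 2 := mem_sphere_iff_norm.1 hw
    have him : |w.im - ζ.im| ≤ δ / 2 := hdist ▸ Complex.abs_im_le_norm (w - ζ)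
    have hre : |w.re - ζ.re| ≤ δ / 2 := hdist ▸ Complex.abs_re_le_norm (w - ζ)
    refine (hC w ?_).trans ?_
    · linarith [abs_sub_abs_le_abs_sub w.im ζ.im]
    · gcongr
      linarith [(abs_le.1 hre).1]
  refine (Complex.norm_deriv_le_of_forall_mem_sphere_norm_le (half_pos hδ)
    hd.diffContOnCl on_circle).trans_eq ?_
  rw [sub_eq_add_neg, Real.exp_add]
  ring

end DecayOnStrip

section SectorEstimate

lemma cos_half_mul_one_add_le_norm_one_add_exp {θ : ℝ} (hθ : θ ≤ π) {v : ℂ} (hv : |v.im| ≤ θ) :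
    Real.cos (θ / 2) * (1 + Real.exp v.re) ≤ ‖1 + Complex.exp v‖ := by
  refine le_of_sq_le_sq ?_ (norm_nonneg _)
  have hcos : Real.cos θ ≤ Real.cos v.im := by
    rw [← Real.cos_abs v.im]
    exact Real.cos_le_cos_of_nonneg_of_le_pi (abs_nonneg _) hθ hv
  have hnorm : ‖1 + Complex.exp v‖ ^ 2 =
      1 + 2 * Real.exp v.re * Real.cos v.im + Real.exp v.re ^ 2 := by
    rw [Complex.sq_norm, Complex.normSq_apply]
    simp only [Complex.add_re, Complex.add_im, Complex.one_re, Complex.one_im, Complex.exp_re,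
      Complex.exp_im]
    linear_combination Real.exp v.re ^ 2 * Real.sin_sq_add_cos_sq v.im
  rw [mul_pow, Real.cos_sq, mul_div_cancel₀ _ two_ne_zero, hnorm]
  nlinarith [sq_nonneg (1 - Real.exp v.re), Real.cos_le_one θ, Real.exp_pos v.re,
    mul_le_mul_of_nonneg_left hcos (Real.exp_pos v.re).le]

lemma exists_pos_mul_one_add_le_norm_one_add_exp_mul_cpow {α δ : ℝ} (hα : 0 ≤ α) (hδ : 0 ≤ δ)
    (hαδ : δ + α * (π / 2) < π) : ∃ c > 0, ∀ ζ w : ℂ, |ζ.im| ≤ δ → 0 < w.re →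
      c * (1 + Real.exp ζ.re * ‖w‖ ^ (-α)) ≤ ‖1 + Complex.exp ζ * w ^ (-α : ℂ)‖ := by
  refine ⟨Real.cos ((δ + α * (π / 2)) / 2),
    Real.cos_pos_of_mem_Ioo ⟨by nlinarith [Real.pi_pos], by linarith⟩, fun ζ w hζ hw => ?_⟩
  have hw₀ : w ≠ 0 := fun h => by simp [h] at hw
  have hv : |(ζ - α * Complex.log w).im| ≤ δ + α * (π / 2) := by
    simp only [Complex.sub_im, Complex.im_ofReal_mul, Complex.log_im]
    refine (abs_sub _ _).trans (add_le_add hζ ?_)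
    rw [abs_mul, abs_of_nonneg hα]
    gcongr
    exact Complex.abs_arg_le_pi_div_two_iff.2 hw.le
  convert cos_half_mul_one_add_le_norm_one_add_exp hαδ.le hv using 3
  · rw [Complex.sub_re, Complex.re_ofReal_mul, Complex.log_re, sub_eq_add_neg, Real.exp_add,
      Real.rpow_def_of_pos (norm_pos_iff.2 hw₀)]
    ring_nf
  · rw [Complex.cpow_def_of_ne_zero hw₀, ← Complex.exp_add]
    ring_nf

end SectorEstimate

section BromwichRepresentation

/-- The integrand of the Bromwich integral of `E_{α,β}(-z)`: the Laplace transform of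
`t ↦ t ^ (β - 1) * E_{α,β}(-z * t ^ α)` is `s ^ (-β) / (1 + z * s ^ (-α))`, and it is inverted here
at `t = 1`. -/
noncomputable def mittagLefflerKernel (α β : ℝ) (z : ℂ) (x : ℝ) : ℂ :=
  Complex.exp (bromwichLine x) * bromwichLine x ^ (-β : ℂ) / (1 + z * bromwichLine x ^ (-α : ℂ))

variable {α β δ : ℝ}

lemma norm_mul_bromwichLine_cpow_neg_le (hα : 0 ≤ α) (z : ℂ) (x : ℝ) :
    ‖z * bromwichLine x ^ (-α : ℂ)‖ ≤ ‖z‖ := by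
  rw [norm_mul, norm_bromwichLine_cpow_neg]
  exact mul_le_of_le_one_right (norm_nonneg z)
    (Real.rpow_le_one_of_one_le_of_nonpos (one_le_norm_bromwichLine x) (by linarith))

lemma hasSum_mittagLefflerKernel (hα : 0 ≤ α) {z : ℂ} (hz : ‖z‖ < 1) (x : ℝ) :
    HasSum (fun k : ℕ => (-z) ^ k *
      (Complex.exp (bromwichLine x) * bromwichLine x ^ (-(α * k + β : ℝ) : ℂ)))
      (mittagLefflerKernel α β z x) := by
  have hratio : ‖-(z * bromwichLine x ^ (-α : ℂ))‖ < 1 := by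
    rw [norm_neg]
    exact (norm_mul_bromwichLine_cpow_neg_le hα z x).trans_lt hz
  have geometric := (hasSum_geometric_of_norm_lt_one hratio).mul_left
    (Complex.exp (bromwichLine x) * bromwichLine x ^ (-β : ℂ))
  rw [sub_neg_eq_add] at geometric
  refine geometric.congr_fun fun k => ?_
  have power : bromwichLine x ^ (-(α * k + β : ℝ) : ℂ) =
      (bromwichLine x ^ (-α : ℂ)) ^ k * bromwichLine x ^ (-β : ℂ) := by
    rw [← Complex.cpow_nat_mul, ← Complex.cpow_add _ _ (bromwichLine_ne_zero x)]
    push_cast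
    ring_nf
  rw [power, ← neg_mul, mul_pow]
  ring

lemma complexMittagLeffler_neg_eq_integral_of_norm_lt_one (hα : 0 ≤ α) (hβ : 1 < β) {z : ℂ}
    (hz : ‖z‖ < 1) : complexMittagLeffler α β (-z) = ∫ x, mittagLefflerKernel α β z x := by
  have integrable_bound : Integrable fun x => Real.exp 1 * ‖bromwichLine x‖ ^ (-β) :=
    (integrable_norm_bromwichLine_rpow_neg hβ).const_mul _
  have termwise : HasSum (fun k : ℕ => ∫ x, (-z) ^ k *
      (Complex.exp (bromwichLine x) * bromwichLine x ^ (-(α * k + β : ℝ) : ℂ)))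
      (∫ x, mittagLefflerKernel α β z x) := by
    refine hasSum_integral_of_dominated_convergence
      (fun k x => ‖z‖ ^ k * (Real.exp 1 * ‖bromwichLine x‖ ^ (-β))) (fun k => ?_) (fun k => ?_)
      (.of_forall fun x => (summable_geometric_of_lt_one (norm_nonneg z) hz).mul_right _) ?_
      (.of_forall (hasSum_mittagLefflerKernel hα hz))
    · exact (((continuous_bromwichLine.cexp).mul (continuous_bromwichLine_cpow _)).const_mul
        _).aestronglyMeasurable
    · refine .of_forall fun x => ?_
      rw [norm_mul, norm_mul, norm_pow, norm_neg, norm_exp_bromwichLine,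
        norm_bromwichLine_cpow_neg]
      have := one_le_norm_bromwichLine x
      have : 0 ≤ α * k := by positivity
      gcongr
      linarith
    · simp only [tsum_mul_right]
      exact integrable_bound.const_mul _
  refine (termwise.congr_fun fun k => ?_).tsum_eq
  have : 1 < α * k + β := by nlinarith [mul_nonneg hα k.cast_nonneg]
  rw [integral_const_mul, integral_exp_bromwichLine_mul_cpow_neg this, mul_comm]

lemma isOpen_setOf_abs_im_lt (δ : ℝ) : IsOpen {ζ : ℂ | |ζ.im| < δ} :=
  isOpen_lt Complex.continuous_im.abs continuous_const

lemma convex_setOf_abs_im_lt (δ : ℝ) : Convex ℝ {ζ : ℂ | |ζ.im| < δ} := by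
  simpa [preimage, abs_lt] using (convex_Ioo (-δ) δ).linear_preimage Complex.imLm

section Strip

variable (hα : 0 ≤ α) (hαδ : δ + α * (π / 2) < π)

include hα hαδ

lemma one_add_exp_mul_bromwichLine_cpow_ne_zero {ζ : ℂ} (hζ : |ζ.im| < δ) (x : ℝ) :
    1 + Complex.exp ζ * bromwichLine x ^ (-α : ℂ) ≠ 0 := by
  obtain ⟨c, hc, hle⟩ := exists_pos_mul_one_add_le_norm_one_add_exp_mul_cpow hα
    ((abs_nonneg _).trans hζ.le) hαδ
  exact norm_pos_iff.1 ((by positivity : 0 < c * _).trans_le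
    (hle ζ (bromwichLine x) hζ.le (bromwichLine_re_pos x)))

lemma exists_norm_mittagLefflerKernel_exp_le (hδ : 0 ≤ δ) (β : ℝ) :
    ∃ C ≥ 0, ∀ ζ : ℂ, |ζ.im| < δ → ∀ x, ‖mittagLefflerKernel α β (Complex.exp ζ) x‖ ≤
      C * (‖bromwichLine x‖ ^ (-β) / (1 + Real.exp ζ.re * ‖bromwichLine x‖ ^ (-α))) := by
  obtain ⟨c, hc, hle⟩ := exists_pos_mul_one_add_le_norm_one_add_exp_mul_cpow hα hδ hαδ
  refine ⟨Real.exp 1 / c, by positivity, fun ζ hζ x => ?_⟩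
  rw [mittagLefflerKernel, norm_div, norm_mul, norm_exp_bromwichLine, norm_bromwichLine_cpow_neg,
    div_mul_div_comm]
  gcongr
  exact hle ζ (bromwichLine x) hζ.le (bromwichLine_re_pos x)

lemma differentiableOn_integral_mittagLefflerKernel_exp (hδ : 0 ≤ δ) (hβ : 1 < β) :
    DifferentiableOn ℂ (fun ζ => ∫ x, mittagLefflerKernel α β (Complex.exp ζ) x)
      {ζ | |ζ.im| < δ} := by
  obtain ⟨C, hC, hle⟩ := exists_norm_mittagLefflerKernel_exp_le hα hαδ hδ β
  refine differentiableOn_integral_of_norm_le (isOpen_setOf_abs_im_lt δ) (fun ζ hζ => ?_)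
    (.of_forall fun x => ?_) (.of_forall fun x ζ hζ => (hle ζ hζ x).trans ?_)
    ((integrable_norm_bromwichLine_rpow_neg hβ).const_mul C)
  · exact ((continuous_bromwichLine.cexp.mul (continuous_bromwichLine_cpow _)).div
      (continuous_const.add (continuous_const.mul (continuous_bromwichLine_cpow _)))
      (one_add_exp_mul_bromwichLine_cpow_ne_zero hα hαδ hζ)).aestronglyMeasurable
  · exact (differentiableOn_const _).div (by fun_prop)
      fun ζ hζ => one_add_exp_mul_bromwichLine_cpow_ne_zero hα hαδ hζ x
  · gcongr
    exact div_le_self (by positivity) (le_add_of_nonneg_right (by positivity))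

end Strip

lemma complexMittagLeffler_neg_exp_eq_integral (hα : 0 < α) (hαδ : δ + α * (π / 2) < π)
    (hβ : 1 < β) {ζ : ℂ} (hζ : |ζ.im| < δ) :
    complexMittagLeffler α β (-Complex.exp ζ) =
      ∫ x, mittagLefflerKernel α β (Complex.exp ζ) x := by
  have hδ : 0 < δ := (abs_nonneg _).trans_lt hζ
  refine eqOn_of_eq_ofReal (isOpen_setOf_abs_im_lt δ) (convex_setOf_abs_im_lt δ).isPreconnected
    (differentiable_complexMittagLeffler_neg_exp hα β).differentiableOn
    (differentiableOn_integral_mittagLefflerKernel_exp hα.le hαδ hδ.le hβ)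
    (x₀ := -1) (by simpa using hδ) ?_ hζ
  filter_upwards [gt_mem_nhds (neg_one_lt_zero : (-1 : ℝ) < 0)] with r hr
  exact complexMittagLeffler_neg_eq_integral_of_norm_lt_one hα.le hβ (by simpa [Complex.norm_exp])

end BromwichRepresentation

section Decay

variable {α : ℝ} (hα₀ : 0 < α) (hα₂ : α < 2)

include hα₀ hα₂

lemma decaysOnStrip_complexMittagLeffler_of_lt {β : ℝ} (hβ : α + 1 < β) :
    DecaysOnStrip fun ζ => complexMittagLeffler α β (-Complex.exp ζ) := by
  have hδ : 0 < (2 - α) * (π / 4) := mul_pos (by linarith) (by positivity)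
  have hαδ : (2 - α) * (π / 4) + α * (π / 2) < π := by nlinarith [Real.pi_pos]
  obtain ⟨C, hC, hle⟩ := exists_norm_mittagLefflerKernel_exp_le hα₀.le hαδ hδ.le β
  have integrable_bound := integrable_norm_bromwichLine_rpow_neg (lt_sub_iff_add_lt'.2 hβ)
  refine ⟨_, hδ, C * ∫ x, ‖bromwichLine x‖ ^ (-(β - α)), fun ζ hζ => ?_⟩
  dsimp only
  rw [complexMittagLeffler_neg_exp_eq_integral hα₀ hαδ (by linarith) hζ, mul_right_comm,
    ← integral_const_mul]
  refine norm_integral_le_of_norm_le (integrable_bound.const_mul _)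
    (.of_forall fun x => (hle ζ hζ x).trans ?_)
  have hw : 0 < ‖bromwichLine x‖ := norm_pos_iff.2 (bromwichLine_ne_zero x)
  rw [mul_assoc]
  gcongr
  calc ‖bromwichLine x‖ ^ (-β) / (1 + Real.exp ζ.re * ‖bromwichLine x‖ ^ (-α))
      ≤ ‖bromwichLine x‖ ^ (-β) / (Real.exp ζ.re * ‖bromwichLine x‖ ^ (-α)) := by
        gcongr
        linarith
    _ = Real.exp (-ζ.re) * ‖bromwichLine x‖ ^ (-(β - α)) := by
        rw [neg_sub, sub_eq_add_neg, Real.rpow_add hw, Real.rpow_neg hw.le α, Real.exp_neg]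
        field_simp

lemma decaysOnStrip_complexMittagLeffler (β : ℝ) :
    DecaysOnStrip fun ζ => complexMittagLeffler α β (-Complex.exp ζ) := by
  obtain ⟨n, hn⟩ := exists_nat_gt (α + 1 - β)
  induction n generalizing β with
  | zero =>
    exact decaysOnStrip_complexMittagLeffler_of_lt hα₀ hα₂ (by simpa [sub_neg] using hn)
  | succ n ih =>
    have shifted := ih (β + 1) (by push_cast at hn; linarith)
    simpa only [smul_eq_mul, ← complexMittagLeffler_neg_exp_eq_add_deriv hα₀] using
      (shifted.const_smul β).add
        ((shifted.deriv (differentiable_complexMittagLeffler_neg_exp hα₀ (β + 1))).const_smul α)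

end Decay

lemma exists_norm_le_div_one_add {E : Type*} [NormedAddCommGroup E] {f : ℝ → E} {C : ℝ}
    (hf : ContinuousOn f (Icc 0 1)) (hC : ∀ x > 0, ‖f x‖ ≤ C / x) :
    ∃ K > 0, ∀ x ≥ 0, ‖f x‖ ≤ K / (1 + x) := by
  obtain ⟨M, hM⟩ := isCompact_Icc.exists_bound_of_continuousOn hf
  have hM₀ : 0 ≤ M := (norm_nonneg _).trans (hM 0 (by simp))
  have hC₀ : 0 ≤ C := by simpa using (norm_nonneg _).trans (hC 1 one_pos)
  refine ⟨2 * (M + C + 1), by positivity, fun x hx => ?_⟩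
  rw [le_div_iff₀ (by positivity)]
  rcases le_total x 1 with hx₁ | hx₁
  · nlinarith [hM x ⟨hx, hx₁⟩, norm_nonneg (f x)]
  · have := (le_div_iff₀ (by linarith)).1 (hC x (by linarith))
    nlinarith [norm_nonneg (f x)]

theorem mittagLeffler_decay_general (α β : ℝ) (hα₀ : 0 < α) (hα₂ : α < 2) :
    ∃ C > 0, ∀ μ : ℝ, 0 ≤ μ → |mittagLeffler α β (-μ)| ≤ C / (1 + μ) := by
  obtain ⟨δ, hδ, C, hC⟩ := decaysOnStrip_complexMittagLeffler hα₀ hα₂ β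
  have norm_eq (x : ℝ) : ‖complexMittagLeffler α β (-x)‖ = |mittagLeffler α β (-x)| := by
    rw [← Complex.ofReal_neg, complexMittagLeffler_ofReal, Complex.norm_real, Real.norm_eq_abs]
  have continuous : Continuous fun x : ℝ => complexMittagLeffler α β (-x) :=
    (differentiable_complexMittagLeffler hα₀ β).continuous.comp Complex.continuous_ofReal.neg
  have decay (x : ℝ) (hx : 0 < x) : ‖complexMittagLeffler α β (-x)‖ ≤ C / x := by
    simpa [← Complex.ofReal_exp, Real.exp_log hx, Real.exp_neg, div_eq_mul_inv] using
      hC (Real.log x) (by simpa using hδ)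
  simpa only [norm_eq] using exists_norm_le_div_one_add continuous.continuousOn decay

/-- Let `α ∈ (1,2)` and `β > 0`. There exists a constant
`C = C(α,β) > 0` such that `|E_{α,β}(−μ)| ≤ C/(1+μ)` for every `μ ≥ 0`. -/
theorem mittagLeffler_decay (α β : ℝ) (hα1 : 1 < α) (hα2 : α < 2) (hβ : 0 < β) :
    ∃ C > 0, ∀ μ : ℝ, 0 ≤ μ → |mittagLeffler α β (-μ)| ≤ C / (1 + μ) :=
  mittagLeffler_decay_general α β (zero_lt_one.trans hα1) hα2
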